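/- arXiv:2204.01402 — 4 statements merged into one kernel-verified Lean document; each statement's English description precedes it below -/
import Mathlib

section
/- Let σ : Δ_d → ℝ^N be continuous, differentiable at every interior point of Δ_d, and of finite volume. Then the cone σ̂ : Δ_{d+1} → ℝ^N is continuous, differentiable at every interior point of Δ_{d+1}, and has finite volume. -/
open MeasureTheory Set

noncomputable section

/-- The standard `d`-simplex `Δ_d ⊆ ℝ^d`. -/
def simplexSet (d : ℕ) : Set (Fin d → ℝ) :=
  {b | (∀ i, 0 ≤ b i) ∧ ∑ i, b i ≤ 1}

/-- The `i`-th face map `δ_i : Δ_d → Δ_{d+1}` (as a map of ambient spaces):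
`δ_0 b = (1 - ∑ b, b)` and, for `i ≥ 1`, `δ_i` inserts a `0` at position `i - 1`. -/
def faceMap (d : ℕ) (i : Fin (d + 2)) (b : Fin d → ℝ) : Fin (d + 1) → ℝ :=
  if h : i = 0 then Fin.cons (1 - ∑ j, b j) b
  else Fin.insertNth (i.pred h) 0 b

/-- Continuous `d`-multilinear forms on `ℝ^N` (on finite-dimensional spaces every
multilinear form is automatically continuous). -/
abbrev Form (N d : ℕ) : Type :=
  ContinuousMultilinearMap ℝ (fun _ : Fin d => (Fin N → ℝ)) ℝ

/-- A multilinear form is alternating if it vanishes whenever two arguments agree. -/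
def IsAlternatingForm {N d : ℕ} (A : Form N d) : Prop :=
  ∀ v : Fin d → (Fin N → ℝ), ∀ i j, v i = v j → i ≠ j → A v = 0

/-- The pullback density `ω(σ(x))(Dσ(x)e_1, …, Dσ(x)e_d)` of a `d`-form `ω` along `σ`
at `x`, where `e_1, …, e_d` is the standard basis of `ℝ^d`. -/
def pullbackDensity {d N : ℕ} (σ : (Fin d → ℝ) → (Fin N → ℝ))
    (ω : (Fin N → ℝ) → Form N d) (x : Fin d → ℝ) : ℝ :=
  ω (σ x) fun j => fderiv ℝ σ x (Pi.single j 1)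

/-- A simplex `σ : Δ_d → ℝ^N` has finite volume if for every family of alternating
`d`-forms, continuous on `σ(Δ_d)`, the pullback density along `σ` is Lebesgue
integrable on the interior of `Δ_d`. -/
def FiniteVolume {d N : ℕ} (σ : (Fin d → ℝ) → (Fin N → ℝ)) : Prop :=
  ∀ ω : (Fin N → ℝ) → Form N d,
    (∀ y ∈ σ '' simplexSet d, IsAlternatingForm (ω y)) →
    ContinuousOn ω (σ '' simplexSet d) →
    IntegrableOn (pullbackDensity σ ω) (interior (simplexSet d))

/-- The pullback density of the exterior derivative `dω` of a `d`-form `ω` along a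
`(d+1)`-simplex `σ` at `x`:
`dω(y)(v_0, …, v_d) = ∑ i, (-1)^i (Dω(y)v_i)(v_0, …, v̂_i, …, v_d)` with `v_i = Dσ(x)e_i`. -/
def pullbackDensityD {d N : ℕ} (σ : (Fin (d + 1) → ℝ) → (Fin N → ℝ))
    (ω : (Fin N → ℝ) → Form N d) (x : Fin (d + 1) → ℝ) : ℝ :=
  ∑ i : Fin (d + 1), (-1 : ℝ) ^ (i : ℕ) *
    fderiv ℝ ω (σ x) (fderiv ℝ σ x (Pi.single i 1))
      (fun j => fderiv ℝ σ x (Pi.single (i.succAbove j) 1))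

/-- A `(d+1)`-simplex `σ` (C¹ on all open faces) satisfies Stokes if it and all of its
faces have finite volume, and Stokes' formula
`∫_{Δ_{d+1}} σ^*(dω) = ∑ i (-1)^i ∫_{Δ_d} (σ ∘ δ_i)^*(ω)` holds for every C¹ family of
alternating `d`-forms `ω` on an open neighbourhood of `σ(Δ_{d+1})`. -/
def SatisfiesStokes {d N : ℕ} (σ : (Fin (d + 1) → ℝ) → (Fin N → ℝ)) : Prop :=
  FiniteVolume σ ∧ (∀ i : Fin (d + 2), FiniteVolume (σ ∘ faceMap d i)) ∧
  ∀ (V : Set (Fin N → ℝ)) (ω : (Fin N → ℝ) → Form N d),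
    IsOpen V → σ '' simplexSet (d + 1) ⊆ V →
    (∀ y ∈ V, IsAlternatingForm (ω y)) → ContDiffOn ℝ 1 ω V →
    ∫ x in interior (simplexSet (d + 1)), pullbackDensityD σ ω x =
      ∑ i : Fin (d + 2), (-1 : ℝ) ^ (i : ℕ) *
        ∫ b in interior (simplexSet d), pullbackDensity (σ ∘ faceMap d i) ω b

/-- `σ : Δ_d → ℝ^N` is C¹ on all open faces: it is continuous on `Δ_d`, C¹ on the
interior of `Δ_d`, and all iterated face composites `σ ∘ δ_{i_1} ∘ ⋯ ∘ δ_{i_k}` have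
the same property. -/
def C1OnOpenFaces (N : ℕ) : ∀ d, ((Fin d → ℝ) → (Fin N → ℝ)) → Prop
  | 0, σ => ContinuousOn σ (simplexSet 0) ∧ ContDiffOn ℝ 1 σ (interior (simplexSet 0))
  | d + 1, σ => ContinuousOn σ (simplexSet (d + 1)) ∧
      ContDiffOn ℝ 1 σ (interior (simplexSet (d + 1))) ∧
      ∀ i : Fin (d + 2), C1OnOpenFaces N d (σ ∘ faceMap d i)

/-- `σ` and all of its iterated face composites have finite volume. -/
def FiniteVolumeFaces (N : ℕ) : ∀ d, ((Fin d → ℝ) → (Fin N → ℝ)) → Prop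
  | 0, σ => FiniteVolume σ
  | d + 1, σ => FiniteVolume σ ∧ ∀ i : Fin (d + 2), FiniteVolumeFaces N d (σ ∘ faceMap d i)

/-- `σ` and all of its iterated face composites satisfy Stokes
(a `0`-simplex satisfies Stokes by convention). -/
def SatisfiesStokesFaces (N : ℕ) : ∀ d, ((Fin d → ℝ) → (Fin N → ℝ)) → Prop
  | 0, _ => True
  | d + 1, σ => SatisfiesStokes σ ∧ ∀ i : Fin (d + 2), SatisfiesStokesFaces N d (σ ∘ faceMap d i)

/-- The cone `σ̂ : Δ_{d+1} → ℝ^N` over a simplex `σ : Δ_d → ℝ^N`: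
`σ̂(a_0, …, a_d) = A ⬝ σ(a_1/A, …, a_d/A)` with `A = ∑ a_i` if `A ≠ 0`, and `0` else. -/
def cone {d N : ℕ} (σ : (Fin d → ℝ) → (Fin N → ℝ)) (a : Fin (d + 1) → ℝ) : Fin N → ℝ :=
  if (∑ i, a i) = 0 then 0 else (∑ i, a i) • σ fun j => a j.succ / ∑ i, a i

/-- The map `q(t, b) = ((1-t)(1-∑ b), (1-t)b_1, …, (1-t)b_d)` from `[0,1] × Δ_d`
onto `Δ_{d+1}`. -/
def qMap (d : ℕ) (p : ℝ × (Fin d → ℝ)) : Fin (d + 1) → ℝ :=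
  Fin.cons ((1 - p.1) * (1 - ∑ j, p.2 j)) fun j => (1 - p.1) * p.2 j

/-- The inverse `i(a_0, …, a_d) = (1 - A, a_1/A, …, a_d/A)`, `A = ∑ a_i`, of `q`. -/
def iMap (d : ℕ) (a : Fin (d + 1) → ℝ) : ℝ × (Fin d → ℝ) :=
  (1 - ∑ i, a i, fun j => a j.succ / ∑ i, a i)

/-! ### Multilinear algebra -/

/-- The alternating map underlying an alternating form. -/
def altOfForm {N d : ℕ} (A : Form N d) (hA : IsAlternatingForm A) :
    (Fin N → ℝ) [⋀^Fin d]→ₗ[ℝ] ℝ :=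
  { A.toMultilinearMap with
    map_eq_zero_of_eq' := fun v i j h hij => hA v i j h hij }

theorem altOfForm_apply {N d : ℕ} (A : Form N d) (hA : IsAlternatingForm A)
    (v : Fin d → (Fin N → ℝ)) : altOfForm A hA v = A v := rfl

theorem alternating_expand {N d : ℕ} (B : (Fin N → ℝ) [⋀^Fin d]→ₗ[ℝ] ℝ)
    (u : Fin d → (Fin N → ℝ)) :
    B u = ∑ I : Fin d → Fin N, ((d.factorial : ℝ)⁻¹ * B (fun j => Pi.single (I j) 1)) *
      (Matrix.of fun j k => u j (I k)).det := by
  have hexp : ∀ w : Fin d → (Fin N → ℝ), B w = ∑ I : Fin d → Fin N,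
      (∏ j, w j (I j)) * B (fun j => Pi.single (I j) 1) := by
    intro w
    have h1 : w = fun j => ∑ k, w j k • (Pi.single k 1 : Fin N → ℝ) := by
      funext j
      exact pi_eq_sum_univ' (w j)
    conv_lhs => rw [h1]
    have h2 := B.toMultilinearMap.map_sum
      (fun j (k : Fin N) => w j k • (Pi.single k 1 : Fin N → ℝ))
    refine h2.trans (Finset.sum_congr rfl fun I _ => ?_)
    exact B.toMultilinearMap.map_smul_univ (fun j => w j (I j)) _
  have hsum : (d.factorial : ℝ) * B u = ∑ I : Fin d → Fin N,
      B (fun j => Pi.single (I j) 1) * (Matrix.of fun j k => u j (I k)).det := by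
    have h3 : ∀ p : Equiv.Perm (Fin d), B u = Equiv.Perm.sign p • B (u ∘ p) := by
      intro p
      rw [B.map_perm, smul_smul, Int.units_mul_self, one_smul]
    calc (d.factorial : ℝ) * B u = ∑ p : Equiv.Perm (Fin d), B u := by
          simp [Fintype.card_perm]
      _ = ∑ p : Equiv.Perm (Fin d), Equiv.Perm.sign p • B (u ∘ p) :=
          Finset.sum_congr rfl fun p _ => h3 p
      _ = ∑ p : Equiv.Perm (Fin d), ∑ I : Fin d → Fin N,
            Equiv.Perm.sign p • ((∏ j, u (p j) (I j)) * B (fun j => Pi.single (I j) 1)) := by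
          refine Finset.sum_congr rfl fun p _ => ?_
          rw [hexp, Finset.smul_sum]
          rfl
      _ = _ := by
          rw [Finset.sum_comm]
          refine Finset.sum_congr rfl fun I _ => ?_
          rw [Matrix.det_apply, Finset.mul_sum]
          refine Finset.sum_congr rfl fun p _ => ?_
          rw [mul_comm (B _), smul_mul_assoc]
          rfl
  have hne : (d.factorial : ℝ) ≠ 0 := by exact_mod_cast d.factorial_ne_zero
  simp only [mul_assoc]
  rw [← Finset.mul_sum, ← hsum, inv_mul_cancel_left₀ hne]

theorem form_expand {N d : ℕ} (η : Form N (d + 1)) (hη : IsAlternatingForm η)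
    (s : Fin N → ℝ) (u : Fin d → (Fin N → ℝ)) :
    η (Fin.cons s u) = ∑ I : Fin d → Fin N,
      ((d.factorial : ℝ)⁻¹ * η (Fin.cons s (fun j => Pi.single (I j) 1))) *
      (Matrix.of fun j k => u j (I k)).det :=
  alternating_expand ((altOfForm η hη).curryLeft s) u

theorem form_det {N n : ℕ} (η : Form N n) (hη : IsAlternatingForm η)
    (L : (Fin n → ℝ) →L[ℝ] (Fin N → ℝ)) (T : (Fin n → ℝ) →L[ℝ] (Fin n → ℝ)) :
    η (fun j => L (T (Pi.single j 1))) = T.det * η (fun j => L (Pi.single j 1)) := by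
  have h := AlternatingMap.eq_smul_basis_det (Pi.basisFun ℝ (Fin n))
    ((altOfForm η hη).compLinearMap (L : (Fin n → ℝ) →ₗ[ℝ] (Fin N → ℝ)))
  have h2 := DFunLike.congr_fun h ((T : (Fin n → ℝ) →ₗ[ℝ] (Fin n → ℝ)) ∘ Pi.basisFun ℝ (Fin n))
  rw [AlternatingMap.smul_apply, Module.Basis.det_comp, Module.Basis.det_self] at h2
  simp only [AlternatingMap.compLinearMap_apply, altOfForm_apply, Function.comp_apply,
    Pi.basisFun_apply, smul_eq_mul, mul_one] at h2
  rw [mul_comm] at h2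
  exact h2

/-- The form `v ↦ det (v_j (I k))`. -/
def minorForm {N d : ℕ} (I : Fin d → Fin N) : Form N d :=
  { (Matrix.detRowAlternating.compLinearMap (LinearMap.funLeft ℝ ℝ I) :
      (Fin N → ℝ) [⋀^Fin d]→ₗ[ℝ] ℝ).toMultilinearMap with
    cont := by
      change Continuous fun v : Fin d → (Fin N → ℝ) =>
        (Matrix.of fun j k => v j (I k)).det
      apply Continuous.matrix_det
      fun_prop }

theorem minorForm_apply {N d : ℕ} (I : Fin d → Fin N) (v : Fin d → (Fin N → ℝ)) :
    minorForm I v = (Matrix.of fun j k => v j (I k)).det := rfl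

theorem minorForm_alt {N d : ℕ} (I : Fin d → Fin N) : IsAlternatingForm (minorForm I) :=
  fun v i j h hij => (Matrix.detRowAlternating.compLinearMap (LinearMap.funLeft ℝ ℝ I) :
      (Fin N → ℝ) [⋀^Fin d]→ₗ[ℝ] ℝ).map_eq_zero_of_eq v h hij

/-! ### The simplex -/

theorem isCompact_simplexSet (d : ℕ) : IsCompact (simplexSet d) := by
  have hcl : IsClosed (simplexSet d) := by
    have h : simplexSet d = (⋂ i, {b : Fin d → ℝ | 0 ≤ b i}) ∩ {b | ∑ i, b i ≤ 1} := by
      ext b; simp [simplexSet]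
    rw [h]
    refine (isClosed_iInter fun i => isClosed_le continuous_const (continuous_apply i)).inter
      (isClosed_le (by fun_prop) continuous_const)
  refine (isCompact_Icc (a := (0 : Fin d → ℝ)) (b := 1)).of_isClosed_subset hcl ?_
  rintro b ⟨h0, h1⟩
  refine ⟨h0, fun i => ?_⟩
  exact (Finset.single_le_sum (fun j _ => h0 j) (Finset.mem_univ i)).trans h1

theorem interior_simplexSet (d : ℕ) :
    interior (simplexSet d) = {b | (∀ i, 0 < b i) ∧ ∑ i, b i < 1} := by
  apply Subset.antisymm
  · intro b hb
    have hb' := interior_subset hb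
    refine ⟨fun i => ?_, ?_⟩
    · have h1 : interior (simplexSet d) ⊆ interior ((Function.eval i) ⁻¹' (Ici (0 : ℝ))) :=
        interior_mono fun c hc => hc.1 i
      have h2 := h1 hb
      rw [← (isOpenMap_eval (X := fun _ : Fin d => ℝ) i).preimage_interior_eq_interior_preimage
        (continuous_apply i), interior_Ici] at h2
      exact h2
    · refine lt_of_le_of_ne hb'.2 fun h => ?_
      have hcont : Continuous fun t : ℝ => t • b := by fun_prop
      have h1 : (fun t : ℝ => t • b) ⁻¹' interior (simplexSet d) ∈ nhds (1 : ℝ) :=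
        hcont.continuousAt.preimage_mem_nhds (by
          rw [one_smul]; exact isOpen_interior.mem_nhds hb)
      obtain ⟨ε, hε, hball⟩ := Metric.mem_nhds_iff.1 h1
      have h2 : (1 + ε / 2) ∈ Metric.ball (1 : ℝ) ε := by
        rw [Metric.mem_ball, Real.dist_eq, add_sub_cancel_left, abs_of_pos (by linarith)]
        linarith
      have h3 := (interior_subset (hball h2)).2
      simp only [Pi.smul_apply, smul_eq_mul, ← Finset.mul_sum, h] at h3
      linarith
  · apply interior_maximal
    · rintro b ⟨h0, h1⟩
      exact ⟨fun i => (h0 i).le, h1.le⟩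
    · have h : {b : Fin d → ℝ | (∀ i, 0 < b i) ∧ ∑ i, b i < 1} =
          (⋂ i, {b : Fin d → ℝ | 0 < b i}) ∩ {b | ∑ i, b i < 1} := by
        ext b; simp
      rw [h]
      exact (isOpen_iInter_of_finite fun i => isOpen_lt continuous_const (continuous_apply i)).inter
        (isOpen_lt (by fun_prop) continuous_const)

theorem sum_pos_of_interior {d : ℕ} {a : Fin (d + 1) → ℝ}
    (ha : a ∈ interior (simplexSet (d + 1))) : 0 < ∑ i, a i := by
  rw [interior_simplexSet] at ha
  exact Finset.sum_pos (fun i _ => ha.1 i) ⟨0, Finset.mem_univ _⟩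

theorem tail_mem {d : ℕ} {a : Fin (d + 1) → ℝ} (ha : a ∈ simplexSet (d + 1))
    (hA : (∑ i, a i) ≠ 0) : (fun j : Fin d => a j.succ / ∑ i, a i) ∈ simplexSet d := by
  have hpos : 0 < ∑ i, a i := lt_of_le_of_ne (Finset.sum_nonneg fun i _ => ha.1 i) hA.symm
  refine ⟨fun i => div_nonneg (ha.1 _) hpos.le, ?_⟩
  rw [← Finset.sum_div, div_le_one hpos, Fin.sum_univ_succ]
  linarith [ha.1 0]

theorem tail_mem_interior {d : ℕ} {a : Fin (d + 1) → ℝ}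
    (ha : a ∈ interior (simplexSet (d + 1))) :
    (fun j : Fin d => a j.succ / ∑ i, a i) ∈ interior (simplexSet d) := by
  have hpos := sum_pos_of_interior ha
  rw [interior_simplexSet] at ha ⊢
  refine ⟨fun i => div_pos (ha.1 _) hpos, ?_⟩
  rw [← Finset.sum_div, div_lt_one hpos, Fin.sum_univ_succ]
  linarith [ha.1 0]

/-! ### Continuity and differentiability of the cone -/

theorem cone_continuousOn {d N : ℕ} (σ : (Fin d → ℝ) → (Fin N → ℝ))
    (hc : ContinuousOn σ (simplexSet d)) : ContinuousOn (cone σ) (simplexSet (d + 1)) := by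
  intro a ha
  by_cases hA : (∑ i, a i) = 0
  · obtain ⟨C, hC⟩ := (isCompact_simplexSet d).exists_bound_of_continuousOn hc
    have hca : cone σ a = 0 := by simp [cone, hA]
    rw [ContinuousWithinAt, hca]
    have hlim : Filter.Tendsto (fun x : Fin (d + 1) → ℝ => (∑ i, x i) * C)
        (nhdsWithin a (simplexSet (d + 1))) (nhds 0) := by
      have h : Continuous fun x : Fin (d + 1) → ℝ => (∑ i, x i) * C := by fun_prop
      have h2 := (h.tendsto a).mono_left (nhdsWithin_le_nhds (s := simplexSet (d + 1)))
      simpa [hA] using h2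
    refine squeeze_zero_norm' ?_ hlim
    filter_upwards [self_mem_nhdsWithin] with x hx
    by_cases hX : (∑ i, x i) = 0
    · simp [cone, hX]
    · have h0 : 0 ≤ ∑ i, x i := Finset.sum_nonneg fun i _ => hx.1 i
      rw [cone, if_neg hX, norm_smul, Real.norm_of_nonneg h0]
      exact mul_le_mul_of_nonneg_left (hC _ (tail_mem hx hX)) h0
  · have hev : ∀ᶠ x in nhdsWithin a (simplexSet (d + 1)), (∑ i, x i) ≠ 0 := by
      have h : Continuous fun x : Fin (d + 1) → ℝ => ∑ i, x i := by fun_prop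
      exact (h.continuousAt.eventually_ne hA).filter_mono nhdsWithin_le_nhds
    have hsum : Filter.Tendsto (fun x : Fin (d + 1) → ℝ => ∑ i, x i)
        (nhdsWithin a (simplexSet (d + 1))) (nhds (∑ i, a i)) := by
      have h : Continuous fun x : Fin (d + 1) → ℝ => ∑ i, x i := by fun_prop
      exact (h.tendsto a).mono_left nhdsWithin_le_nhds
    have htail : Filter.Tendsto (fun (x : Fin (d + 1) → ℝ) (j : Fin d) => x j.succ / ∑ i, x i)
        (nhdsWithin a (simplexSet (d + 1)))
        (nhdsWithin (fun j : Fin d => a j.succ / ∑ i, a i) (simplexSet d)) := by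
      refine tendsto_nhdsWithin_iff.2 ⟨?_, ?_⟩
      · refine tendsto_pi_nhds.2 fun j => ?_
        exact (((continuous_apply j.succ).tendsto a).mono_left nhdsWithin_le_nhds).div hsum hA
      · filter_upwards [hev, self_mem_nhdsWithin] with x hx hx'
        exact tail_mem hx' hx
    have hmain := hsum.smul ((hc _ (tail_mem ha hA)).tendsto.comp htail)
    rw [ContinuousWithinAt]
    have hca : cone σ a = (∑ i, a i) • σ fun j => a j.succ / ∑ i, a i := if_neg hA
    rw [hca]
    refine hmain.congr' ?_
    filter_upwards [hev] with x hx
    simp [cone, hx]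

theorem cone_differentiableAt {d N : ℕ} (σ : (Fin d → ℝ) → (Fin N → ℝ))
    (hd : DifferentiableOn ℝ σ (interior (simplexSet d))) {a : Fin (d + 1) → ℝ}
    (ha : a ∈ interior (simplexSet (d + 1))) : DifferentiableAt ℝ (cone σ) a := by
  have hA := (sum_pos_of_interior ha).ne'
  have hσ : DifferentiableAt ℝ σ (fun j : Fin d => a j.succ / ∑ i, a i) :=
    hd.differentiableAt (isOpen_interior.mem_nhds (tail_mem_interior ha))
  have hsum : DifferentiableAt ℝ (fun x : Fin (d + 1) → ℝ => ∑ i, x i) a := by fun_prop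
  have htail : DifferentiableAt ℝ
      (fun (x : Fin (d + 1) → ℝ) (j : Fin d) => x j.succ / ∑ i, x i) a := by
    refine differentiableAt_pi.2 fun j => ?_
    have hj : DifferentiableAt ℝ (fun x : Fin (d + 1) → ℝ => x j.succ) a := by fun_prop
    simp only [div_eq_mul_inv]
    exact hj.mul (hsum.inv hA)
  have h1 := hsum.smul (DifferentiableAt.comp a hσ htail)
  refine h1.congr_of_eventuallyEq ?_
  filter_upwards [hsum.continuousAt.eventually_ne hA] with x hx
  simp [cone, hx]

/-! ### The parametrization -/

/-- `Φ(t, b) = (t (1 - ∑ b), t b)`. -/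
def coneParam (d : ℕ) (x : Fin (d + 1) → ℝ) : Fin (d + 1) → ℝ :=
  Fin.cons (x 0 * (1 - ∑ j : Fin d, x j.succ)) fun j => x 0 * x j.succ

/-- The open parameter domain. -/
def paramSet (d : ℕ) : Set (Fin (d + 1) → ℝ) :=
  {x | x 0 ∈ Ioo (0 : ℝ) 1 ∧ (fun j : Fin d => x j.succ) ∈ interior (simplexSet d)}

/-- The closed parameter domain. -/
def paramSetC (d : ℕ) : Set (Fin (d + 1) → ℝ) :=
  {x | x 0 ∈ Icc (0 : ℝ) 1 ∧ (fun j : Fin d => x j.succ) ∈ simplexSet d}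

theorem paramSet_subset (d : ℕ) : paramSet d ⊆ paramSetC d :=
  fun _ hx => ⟨Ioo_subset_Icc_self hx.1, interior_subset hx.2⟩

theorem isOpen_paramSet (d : ℕ) : IsOpen (paramSet d) := by
  have h0 : Continuous fun x : Fin (d + 1) → ℝ => x 0 := by fun_prop
  have h1 : Continuous fun (x : Fin (d + 1) → ℝ) (j : Fin d) => x j.succ := by fun_prop
  exact (isOpen_Ioo.preimage h0).inter (isOpen_interior.preimage h1)

theorem isCompact_paramSetC (d : ℕ) : IsCompact (paramSetC d) := by
  have h := (isCompact_Icc (a := (0 : ℝ)) (b := 1)).prod (isCompact_simplexSet d)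
  have hf : Continuous fun p : ℝ × (Fin d → ℝ) => (Fin.cons p.1 p.2 : Fin (d + 1) → ℝ) := by
    refine continuous_pi fun i => ?_
    refine Fin.cases ?_ (fun j => ?_) i
    · simpa using continuous_fst
    · simp only [Fin.cons_succ]; fun_prop
  convert h.image hf using 1
  ext x
  constructor
  · intro hx
    exact ⟨(x 0, fun j => x j.succ), ⟨hx.1, hx.2⟩, Fin.cons_self_tail x⟩
  · rintro ⟨p, hp, rfl⟩
    exact ⟨by simpa using hp.1, by simpa using hp.2⟩

theorem sum_coneParam {d : ℕ} (x : Fin (d + 1) → ℝ) : ∑ i, coneParam d x i = x 0 := by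
  rw [Fin.sum_univ_succ]
  simp only [coneParam, Fin.cons_zero, Fin.cons_succ, ← Finset.mul_sum]
  ring

theorem contDiff_coneParam (d : ℕ) : ContDiff ℝ 1 (coneParam d) := by
  refine contDiff_pi.2 fun i => ?_
  refine Fin.cases ?_ (fun j => ?_) i
  · simp only [coneParam, Fin.cons_zero]; fun_prop
  · simp only [coneParam, Fin.cons_succ]; fun_prop

theorem injOn_coneParam (d : ℕ) : InjOn (coneParam d) (paramSet d) := by
  intro x hx y hy h
  have h0 : x 0 = y 0 := by rw [← sum_coneParam x, ← sum_coneParam y, h]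
  funext i
  refine Fin.cases h0 (fun j => ?_) i
  have hj := congrFun h j.succ
  simp only [coneParam, Fin.cons_succ] at hj
  rw [← h0] at hj
  exact mul_left_cancel₀ hx.1.1.ne' hj

theorem coneParam_image (d : ℕ) : coneParam d '' paramSet d = interior (simplexSet (d + 1)) := by
  apply Subset.antisymm
  · rintro _ ⟨x, ⟨hx0, hx⟩, rfl⟩
    rw [interior_simplexSet] at hx ⊢
    refine ⟨fun i => ?_, ?_⟩
    · refine Fin.cases ?_ (fun j => ?_) i
      · simp only [coneParam, Fin.cons_zero]
        exact mul_pos hx0.1 (sub_pos.2 hx.2)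
      · simp only [coneParam, Fin.cons_succ]
        exact mul_pos hx0.1 (hx.1 j)
    · rw [sum_coneParam]; exact hx0.2
  · intro a ha
    have hpos := sum_pos_of_interior ha
    have hi := tail_mem_interior ha
    have ha' := ha
    rw [interior_simplexSet] at ha'
    refine ⟨Fin.cons (∑ i, a i) fun j => a j.succ / ∑ i, a i, ⟨?_, ?_⟩, ?_⟩
    · simpa using ⟨hpos, ha'.2⟩
    · simpa using hi
    · funext i
      refine Fin.cases ?_ (fun j => ?_) i
      · simp only [coneParam, Fin.cons_zero, Fin.cons_succ]
        rw [← Finset.sum_div, mul_sub, mul_div_cancel₀ _ hpos.ne', mul_one, Fin.sum_univ_succ]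
        ring
      · simp only [coneParam, Fin.cons_zero, Fin.cons_succ]
        rw [mul_div_cancel₀ _ hpos.ne']

theorem coneParam_mem {d : ℕ} {x : Fin (d + 1) → ℝ} (hx : x ∈ paramSetC d) :
    coneParam d x ∈ simplexSet (d + 1) := by
  refine ⟨fun i => ?_, ?_⟩
  · refine Fin.cases ?_ (fun j => ?_) i
    · simp only [coneParam, Fin.cons_zero]
      exact mul_nonneg hx.1.1 (sub_nonneg.2 hx.2.2)
    · simp only [coneParam, Fin.cons_succ]
      exact mul_nonneg hx.1.1 (hx.2.1 j)
  · rw [sum_coneParam]; exact hx.1.2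

theorem cone_coneParam {d N : ℕ} (σ : (Fin d → ℝ) → (Fin N → ℝ)) (x : Fin (d + 1) → ℝ) :
    cone σ (coneParam d x) = x 0 • σ fun j => x j.succ := by
  rw [cone, sum_coneParam]
  split_ifs with h
  · rw [h, zero_smul]
  · congr 2
    funext j
    simp only [coneParam, Fin.cons_succ]
    rw [mul_div_cancel_left₀ _ h]

theorem fderiv_cone_coneParam {d N : ℕ} (σ : (Fin d → ℝ) → (Fin N → ℝ))
    (hd : DifferentiableOn ℝ σ (interior (simplexSet d))) {x : Fin (d + 1) → ℝ}
    (hx : x ∈ paramSet d) :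
    (fun j => fderiv ℝ (cone σ) (coneParam d x) (fderiv ℝ (coneParam d) x (Pi.single j 1))) =
      (Fin.cons (σ fun j => x j.succ) fun j =>
        x 0 • fderiv ℝ σ (fun j => x j.succ) (Pi.single j 1) : Fin (d + 1) → (Fin N → ℝ)) := by
  have hΦ : coneParam d x ∈ interior (simplexSet (d + 1)) :=
    coneParam_image d ▸ mem_image_of_mem _ hx
  have h1 : HasFDerivAt (cone σ ∘ coneParam d)
      ((fderiv ℝ (cone σ) (coneParam d x)).comp (fderiv ℝ (coneParam d) x)) x :=
    (cone_differentiableAt σ hd hΦ).hasFDerivAt.comp x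
      (((contDiff_coneParam d).differentiable (by norm_num)) x).hasFDerivAt
  have hσ : HasFDerivAt σ (fderiv ℝ σ fun j => x j.succ) (fun j => x j.succ) :=
    (hd.differentiableAt (isOpen_interior.mem_nhds hx.2)).hasFDerivAt
  let P : (Fin (d + 1) → ℝ) →L[ℝ] (Fin d → ℝ) :=
    ContinuousLinearMap.pi fun j => ContinuousLinearMap.proj j.succ
  have hP : HasFDerivAt (fun (y : Fin (d + 1) → ℝ) (j : Fin d) => y j.succ) P x := P.hasFDerivAt
  have h0 : HasFDerivAt (fun y : Fin (d + 1) → ℝ => y 0)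
      (ContinuousLinearMap.proj (R := ℝ) (φ := fun _ : Fin (d + 1) => ℝ) 0) x :=
    (ContinuousLinearMap.proj (R := ℝ) (φ := fun _ : Fin (d + 1) => ℝ) 0).hasFDerivAt
  have h2 := h0.smul (HasFDerivAt.comp x hσ hP)
  have heq : cone σ ∘ coneParam d = fun y => y 0 • σ fun j => y j.succ :=
    funext fun y => cone_coneParam σ y
  rw [heq] at h1
  have h3 := h1.unique h2
  funext j
  have h4 := DFunLike.congr_fun h3 (Pi.single j 1)
  refine h4.trans ?_
  have hPj : P (Pi.single j 1) = fun k => (Pi.single j 1 : Fin (d + 1) → ℝ) k.succ := rfl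
  refine Fin.cases ?_ (fun k => ?_) j
  · have : P (Pi.single 0 1) = 0 := by
      funext k
      change (Pi.single 0 1 : Fin (d + 1) → ℝ) k.succ = 0
      simp
    simp [this]
  · have : P (Pi.single k.succ 1) = Pi.single k 1 := by
      funext l
      change (Pi.single k.succ 1 : Fin (d + 1) → ℝ) l.succ = _
      simp [Pi.single_apply]
    simp [this]

theorem integrableOn_tail {d : ℕ} {f : (Fin d → ℝ) → ℝ}
    (hf : IntegrableOn f (interior (simplexSet d))) :
    IntegrableOn (fun x : Fin (d + 1) → ℝ => f fun j => x j.succ) (paramSet d) := by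
  have h1 : IntegrableOn (fun p : ℝ × (Fin d → ℝ) => f p.2)
      (Ioo (0 : ℝ) 1 ×ˢ interior (simplexSet d)) := by
    have h := Integrable.comp_snd hf (volume.restrict (Ioo (0 : ℝ) 1))
    rw [Measure.prod_restrict] at h
    exact h
  have h2 := ((volume_preserving_piFinSuccAbove (fun _ : Fin (d + 1) => ℝ)
    0).integrableOn_comp_preimage (MeasurableEquiv.measurableEmbedding _)).2 h1
  exact h2

theorem cone_fv {d N : ℕ} (σ : (Fin d → ℝ) → (Fin N → ℝ))
    (hc : ContinuousOn σ (simplexSet d))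
    (hd : DifferentiableOn ℝ σ (interior (simplexSet d)))
    (hv : FiniteVolume σ) : FiniteVolume (cone σ) := by
  intro ω hω hωc
  have hmeas : MeasurableSet (paramSet d) := (isOpen_paramSet d).measurableSet
  have hdiff : Differentiable ℝ (coneParam d) :=
    (contDiff_coneParam d).differentiable (by norm_num)
  rw [← coneParam_image, integrableOn_image_iff_integrableOn_abs_det_fderiv_smul volume hmeas
    (fun x _ => (hdiff x).hasFDerivAt.hasFDerivWithinAt) (injOn_coneParam d)]
  have hdetc : Continuous fun x => (fderiv ℝ (coneParam d) x).det :=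
    ContinuousLinearMap.continuous_det.comp
      ((contDiff_coneParam d).continuous_fderiv (by norm_num))
  -- coefficient functions
  let c : (Fin d → Fin N) → (Fin (d + 1) → ℝ) → ℝ := fun I x =>
    x 0 ^ d * ((d.factorial : ℝ)⁻¹ * ω (x 0 • σ fun j => x j.succ)
      (Fin.cons (σ fun j => x j.succ) fun j => Pi.single (I j) 1))
  have hmemim : ∀ x ∈ paramSetC d, (x 0 • σ fun j => x j.succ) ∈
      cone σ '' simplexSet (d + 1) := fun x hx =>
    ⟨coneParam d x, coneParam_mem hx, cone_coneParam σ x⟩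
  have hσc : ContinuousOn (fun x : Fin (d + 1) → ℝ => σ fun j => x j.succ) (paramSetC d) :=
    hc.comp (Continuous.continuousOn (by fun_prop)) fun x hx => hx.2
  have hcc : ∀ I, ContinuousOn (c I) (paramSetC d) := by
    intro I
    have h1 : ContinuousOn (fun x : Fin (d + 1) → ℝ => x 0 • σ fun j => x j.succ)
        (paramSetC d) := (continuous_apply 0).continuousOn.smul hσc
    have h2 := hωc.comp h1 hmemim
    have h3 : ContinuousOn (fun x : Fin (d + 1) → ℝ => (Fin.cons (σ fun j => x j.succ)
        fun j => Pi.single (I j) 1 : Fin (d + 1) → (Fin N → ℝ))) (paramSetC d) := by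
      refine continuousOn_pi.2 fun i => ?_
      refine Fin.cases ?_ (fun j => ?_) i
      · simpa using hσc
      · simpa using continuousOn_const
    exact ((continuous_apply 0).pow d).continuousOn.mul
      (continuousOn_const.mul (h2.eval h3))
  have hint : ∀ I : Fin d → Fin N, IntegrableOn
      (fun x : Fin (d + 1) → ℝ => c I x *
        pullbackDensity σ (fun _ => minorForm I) fun j => x j.succ) (paramSet d) := by
    intro I
    obtain ⟨C, hC⟩ := (isCompact_paramSetC d).exists_bound_of_continuousOn (hcc I)
    have hI := hv (fun _ => minorForm I) (fun _ _ => minorForm_alt I) continuousOn_const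
    refine Integrable.bdd_mul (c := C) (integrableOn_tail hI)
      (((hcc I).mono (paramSet_subset d)).aestronglyMeasurable hmeas) ?_
    exact (ae_restrict_iff' hmeas).2 (Filter.Eventually.of_forall fun x hx =>
      hC x (paramSet_subset d hx))
  have hsum : IntegrableOn (fun x : Fin (d + 1) → ℝ => ∑ I : Fin d → Fin N, c I x *
        pullbackDensity σ (fun _ => minorForm I) fun j => x j.succ) (paramSet d) :=
    integrable_finsetSum _ fun I _ => hint I
  have hsgn : Measurable fun x : Fin (d + 1) → ℝ =>
      if 0 ≤ (fderiv ℝ (coneParam d) x).det then (1 : ℝ) else -1 :=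
    Measurable.ite (measurableSet_le measurable_const hdetc.measurable)
      measurable_const measurable_const
  have hfin := Integrable.bdd_mul (c := 1) hsum (hsgn.aestronglyMeasurable)
    (Filter.Eventually.of_forall fun x => by split_ifs <;> simp)
  refine IntegrableOn.congr_fun hfin ?_ hmeas
  intro x hx
  have hxC := paramSet_subset d hx
  have halt := hω _ (hmemim x hxC)
  have key : (fderiv ℝ (coneParam d) x).det * pullbackDensity (cone σ) ω (coneParam d x) =
      ∑ I : Fin d → Fin N, c I x *
        pullbackDensity σ (fun _ => minorForm I) fun j => x j.succ := by
    rw [pullbackDensity, cone_coneParam, ← form_det _ halt, fderiv_cone_coneParam σ hd hx,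
      form_expand _ halt]
    refine Finset.sum_congr rfl fun I _ => ?_
    have hdet : (Matrix.of fun j k => (x 0 • fderiv ℝ σ (fun j => x j.succ)
        (Pi.single j 1 : Fin d → ℝ)) (I k)).det = x 0 ^ d *
        pullbackDensity σ (fun _ => minorForm I) fun j => x j.succ := by
      have := Matrix.det_smul (Matrix.of fun (j k : Fin d) => fderiv ℝ σ (fun j => x j.succ)
        (Pi.single j 1 : Fin d → ℝ) (I k)) (x 0)
      rw [Fintype.card_fin] at this
      exact this
    rw [hdet]
    simp only [c]
    ring
  change _ = |(fderiv ℝ (coneParam d) x).det| * _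
  simp only
  rw [← key, ← mul_assoc]
  congr 1
  split_ifs with h
  · rw [one_mul, abs_of_nonneg h]
  · rw [abs_of_neg (not_le.1 h)]; ring

/-- **Proposition 2.5.** If `σ : Δ_d → ℝ^N` is continuous, differentiable on the interior
of `Δ_d`, and of finite volume, then the cone `σ̂ : Δ_{d+1} → ℝ^N` is continuous,
differentiable on the interior of `Δ_{d+1}`, and has finite volume. -/
theorem cone_finiteVolume {d N : ℕ} (σ : (Fin d → ℝ) → (Fin N → ℝ))
    (hc : ContinuousOn σ (simplexSet d))
    (hd : DifferentiableOn ℝ σ (interior (simplexSet d)))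
    (hv : FiniteVolume σ) :
    ContinuousOn (cone σ) (simplexSet (d + 1)) ∧
    DifferentiableOn ℝ (cone σ) (interior (simplexSet (d + 1))) ∧
    FiniteVolume (cone σ) := by
  exact ⟨cone_continuousOn σ hc, fun a ha =>
    (cone_differentiableAt σ hd ha).differentiableWithinAt, cone_fv σ hc hd hv⟩

end
end

section
/- Let σ : Δ_d → ℝ^N be continuous on Δ_d and differentiable at every interior point of Δ_d. Suppose that for every strictly increasing map I : {1,…,d} → {1,…,N}, the pullback density of the constant standard d-form dx_I along σ is Lebesgue-integrable on the interior of Δ_d. Then σ has finite volume, i.e., for every map ω from σ(Δ_d) to alternating d-linear forms on ℝ^N that is continuous on σ(Δ_d), the pullback density of ω along σ is Lebesgue-integrable on the interior of Δ_d. -/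
open MeasureTheory Set

noncomputable section

/-- Expansion of an alternating form over all index tuples. -/
theorem factorial_mul_form {N d : ℕ} (A : Form N d) (hA : IsAlternatingForm A)
    (v : Fin d → (Fin N → ℝ)) :
    (d.factorial : ℝ) * A v = ∑ r : Fin d → Fin N,
      A (fun k => Pi.single (r k) 1) * (Matrix.of fun j k : Fin d => v k (r j)).det := by
  let B : (Fin N → ℝ) [⋀^Fin d]→ₗ[ℝ] ℝ :=
    { A.toMultilinearMap with
      map_eq_zero_of_eq' := fun w i j hw hij => hA w i j hw hij }
  have hB : ∀ w, B w = A w := fun w => rfl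
  have hperm : ∀ p : Equiv.Perm (Fin d),
      ((Equiv.Perm.sign p : ℤ) : ℝ) * A (v ∘ p) = A v := by
    intro p
    rw [← hB, ← hB, B.map_perm, Units.smul_def, zsmul_eq_mul, ← mul_assoc]
    rcases Int.units_eq_one_or (Equiv.Perm.sign p) with h | h <;> simp [h]
  have hexp : ∀ w : Fin d → (Fin N → ℝ), A w = ∑ r : Fin d → Fin N,
      (∏ k, w k (r k)) * A (fun k => Pi.single (r k) 1) := by
    intro w
    have h1 : w = fun k => ∑ i, w k i • (Pi.single i (1 : ℝ) : Fin N → ℝ) := by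
      funext k
      exact pi_eq_sum_univ' (w k)
    have h2 : A w = A.toMultilinearMap
        (fun k => ∑ i, w k i • (Pi.single i (1 : ℝ) : Fin N → ℝ)) := by
      rw [← h1]; rfl
    rw [h2, MultilinearMap.map_sum]
    refine Finset.sum_congr rfl fun r _ => ?_
    rw [MultilinearMap.map_smul_univ]
    rfl
  have hsum : (d.factorial : ℝ) * A v =
      ∑ p : Equiv.Perm (Fin d), ((Equiv.Perm.sign p : ℤ) : ℝ) * A (v ∘ p) := by
    rw [Finset.sum_congr rfl fun p _ => hperm p]
    simp [Fintype.card_perm]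
  rw [hsum]
  simp_rw [hexp (v ∘ _), Finset.mul_sum]
  rw [Finset.sum_comm]
  refine Finset.sum_congr rfl fun r _ => ?_
  rw [← Matrix.det_transpose, Matrix.det_apply', Finset.mul_sum]
  refine Finset.sum_congr rfl fun p _ => ?_
  simp only [Matrix.transpose_apply, Matrix.of_apply, Function.comp]
  ring

/-- **Lemma 2.2.** If the pullback densities along `σ` of all the constant standard
`d`-forms `dx_I = dx_{I(1)} ∧ ⋯ ∧ dx_{I(d)}` (for strictly increasing `I : {1,…,d} → {1,…,N}`),
namely `x ↦ det((Dσ(x)e_k)_{I(j)})_{j,k}`, are integrable on the interior of `Δ_d`,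
then `σ` has finite volume. -/
theorem finiteVolume_of_standard_forms {d N : ℕ} (σ : (Fin d → ℝ) → (Fin N → ℝ))
    (hc : ContinuousOn σ (simplexSet d))
    (hd : DifferentiableOn ℝ σ (interior (simplexSet d)))
    (h : ∀ I : Fin d → Fin N, StrictMono I →
      IntegrableOn
        (fun x => (Matrix.of fun j k : Fin d =>
          fderiv ℝ σ x (Pi.single k 1) (I j)).det)
        (interior (simplexSet d))) :
    FiniteVolume σ := by
  intro ω hω hωc
  have hdet : ∀ r : Fin d → Fin N, IntegrableOn
      (fun x => (Matrix.of fun j k : Fin d =>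
        fderiv ℝ σ x (Pi.single k 1) (r j)).det) (interior (simplexSet d)) := by
    intro r
    by_cases hr : Function.Injective r
    · have hm : StrictMono (r ∘ Tuple.sort r) :=
        (Tuple.monotone_sort r).strictMono_of_injective (hr.comp (Tuple.sort r).injective)
      have hi := (h _ hm).const_mul (((Equiv.Perm.sign (Tuple.sort r) : ℤ) : ℝ))
      refine hi.congr (Filter.Eventually.of_forall fun x => ?_)
      have hp := Matrix.det_permute (Tuple.sort r) (Matrix.of fun j k : Fin d =>
        fderiv ℝ σ x (Pi.single k 1) (r j))
      have he : (Matrix.of fun j k : Fin d =>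
          fderiv ℝ σ x (Pi.single k 1) ((r ∘ Tuple.sort r) j)) =
          (Matrix.of fun j k : Fin d =>
            fderiv ℝ σ x (Pi.single k 1) (r j)).submatrix (Tuple.sort r) id := rfl
      simp only
      rw [he, hp, ← mul_assoc]
      rcases Int.units_eq_one_or (Equiv.Perm.sign (Tuple.sort r)) with h | h <;> simp [h]
    · simp only [Function.Injective, not_forall] at hr
      obtain ⟨i, j, hij, hne⟩ := hr
      have hz : (fun x => (Matrix.of fun j k : Fin d =>
        fderiv ℝ σ x (Pi.single k 1) (r j)).det) = fun _ => (0 : ℝ) := by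
        funext x
        refine Matrix.det_zero_of_row_eq hne ?_
        funext k
        simp [hij]
      rw [hz]
      exact integrableOn_zero
  have hcoef : ∀ r : Fin d → Fin N, ContinuousOn
      (fun x => ω (σ x) (fun k => Pi.single (r k) 1)) (simplexSet d) := by
    intro r
    have h1 : ContinuousOn (fun x => ω (σ x)) (simplexSet d) :=
      hωc.comp hc (mapsTo_image _ _)
    exact (ContinuousMultilinearMap.apply ℝ (fun _ : Fin d => (Fin N → ℝ)) ℝ
      (fun k => Pi.single (r k) 1)).continuous.comp_continuousOn h1
  have hs : IntegrableOn (fun x => ∑ r : Fin d → Fin N,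
      ω (σ x) (fun k => Pi.single (r k) 1) * (Matrix.of fun j k : Fin d =>
        fderiv ℝ σ x (Pi.single k 1) (r j)).det) (interior (simplexSet d)) :=
    integrable_finsetSum _ fun r _ =>
      IntegrableOn.continuousOn_mul_of_subset (hcoef r) (hdet r) (isCompact_simplexSet d)
        isOpen_interior.measurableSet interior_subset
  refine IntegrableOn.congr_fun (hs.const_mul ((d.factorial : ℝ)⁻¹)) ?_
    isOpen_interior.measurableSet
  intro x hx
  have hf := factorial_mul_form (ω (σ x)) (hω _ (mem_image_of_mem σ (interior_subset hx)))
    (fun j => fderiv ℝ σ x (Pi.single j 1))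
  have h0 : (d.factorial : ℝ) ≠ 0 := by exact_mod_cast d.factorial_ne_zero
  simp only [pullbackDensity]
  rw [← hf, ← mul_assoc, inv_mul_cancel₀ h0, one_mul]

end
end

section
/- Let g : ℝ^{d+1} → ℝ be a measurable function. Then g is Lebesgue-integrable on Δ_{d+1} if and only if the function (t, b) ↦ g(q(t,b))·(1−t)^d is Lebesgue-integrable on [0,1] × Δ_d. (Here (1−t)^d = |det Dq(t,b)|, so this expresses that a measurable top-degree differential form on Δ_{d+1} is integrable if and only if its pullback along q is integrable on [0,1] × Δ_d.) -/
open MeasureTheory Set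

noncomputable section

/-- `q` written on `ℝ^{d+1}`. -/
def qAux (d : ℕ) (x : Fin (d + 1) → ℝ) : Fin (d + 1) → ℝ := qMap d (x 0, fun j => x j.succ)

/-- Upper triangular factor of the Jacobian. -/
def uAux (d : ℕ) : Matrix (Fin (d + 1)) (Fin (d + 1)) ℝ :=
  Matrix.of fun i j => Fin.cases (Fin.cases 1 (fun _ => -1) j)
    (fun i' => if i'.succ = j then 1 else 0) i

/-- Lower triangular factor of the Jacobian. -/
def nAux (d : ℕ) (x : Fin (d + 1) → ℝ) : Matrix (Fin (d + 1)) (Fin (d + 1)) ℝ :=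
  Matrix.of fun i j => Fin.cases (Fin.cases (-1) (fun _ => 0) j)
    (fun i' => Fin.cases (-x i'.succ) (fun j' => if i' = j' then 1 - x 0 else 0) j) i

lemma det_uAux (d : ℕ) : (uAux d).det = 1 := by
  rw [Matrix.det_of_upperTriangular]
  · rw [Fin.prod_univ_succ]; simp [uAux]
  · intro i j hij
    induction i using Fin.cases with
    | zero => exact absurd hij (by simp)
    | succ i =>
      have : i.succ ≠ j := fun h => by subst h; exact absurd hij (by simp)
      simp [uAux, this]

lemma det_nAux (d : ℕ) (x : Fin (d + 1) → ℝ) : (nAux d x).det = -(1 - x 0) ^ d := by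
  rw [Matrix.det_of_lowerTriangular]
  · rw [Fin.prod_univ_succ]; simp [nAux]
  · intro i j hij
    have hij : i < j := hij
    induction i using Fin.cases with
    | zero =>
      induction j using Fin.cases with
      | zero => exact absurd hij (by simp)
      | succ j => simp [nAux]
    | succ i =>
      induction j using Fin.cases with
      | zero => exact absurd hij (by simp)
      | succ j =>
        have : i ≠ j := fun h => by subst h; exact absurd hij (by simp)
        simp [nAux, this]

/-- The derivative of `qAux`. -/
def dAux (d : ℕ) (x : Fin (d + 1) → ℝ) : (Fin (d + 1) → ℝ) →L[ℝ] (Fin (d + 1) → ℝ) :=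
  LinearMap.toContinuousLinearMap (Matrix.toLin' (uAux d * nAux d x))

lemma det_dAux (d : ℕ) (x : Fin (d + 1) → ℝ) : (dAux d x).det = -(1 - x 0) ^ d := by
  simp [dAux, ContinuousLinearMap.det, LinearMap.det_toLin', Matrix.det_mul, det_uAux, det_nAux]

lemma dAux_succ (d : ℕ) (x v : Fin (d + 1) → ℝ) (i : Fin d) :
    dAux d x v i.succ = (1 - x 0) * v i.succ - v 0 * x i.succ := by
  simp [dAux, uAux, nAux, ← Matrix.mulVec_mulVec, Matrix.mulVec, dotProduct, Fin.sum_univ_succ]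
  ring

lemma dAux_zero (d : ℕ) (x v : Fin (d + 1) → ℝ) :
    dAux d x v 0 = -(1 - x 0) * (∑ j : Fin d, v j.succ) - v 0 * (1 - ∑ j : Fin d, x j.succ) := by
  simp [dAux, uAux, nAux, ← Matrix.mulVec_mulVec, Matrix.mulVec, dotProduct, Fin.sum_univ_succ,
    Finset.sum_add_distrib, ← Finset.mul_sum, ← Finset.sum_mul]
  ring

lemma hasFDerivAt_qAux (d : ℕ) (x : Fin (d + 1) → ℝ) : HasFDerivAt (qAux d) (dAux d x) x := by
  have hp : ∀ i : Fin (d + 1), HasFDerivAt (fun y : Fin (d + 1) → ℝ => y i)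
      (ContinuousLinearMap.proj (R := ℝ) (φ := fun _ : Fin (d + 1) => ℝ) i) x :=
    fun i => hasFDerivAt_apply i x
  rw [hasFDerivAt_pi']
  intro i
  induction i using Fin.cases with
  | zero =>
    have hs := HasFDerivAt.fun_sum (u := Finset.univ) (fun (j : Fin d) _ => hp j.succ)
    have := ((hp 0).const_sub 1).mul (hs.const_sub 1)
    refine this.congr_fderiv ?_
    ext v
    simp [dAux_zero, -Pi.single_apply]
    ring
  | succ i =>
    have := ((hp 0).const_sub 1).mul (hp i.succ)
    refine this.congr_fderiv ?_
    ext v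
    simp [dAux_succ, -Pi.single_apply]
    ring

lemma sum_qAux (d : ℕ) (x : Fin (d + 1) → ℝ) : ∑ i, qAux d x i = 1 - x 0 := by
  simp [qAux, qMap, Fin.sum_univ_succ, ← Finset.mul_sum]
  ring

/-- The source domain. -/
def sAux (d : ℕ) : Set (Fin (d + 1) → ℝ) :=
  {x | x 0 ∈ Set.Ico (0 : ℝ) 1 ∧ (fun j : Fin d => x j.succ) ∈ simplexSet d}

lemma measurableSet_simplexSet (d : ℕ) : MeasurableSet (simplexSet d) := by
  have : IsClosed (simplexSet d) := by
    have : simplexSet d = (⋂ i, {b | 0 ≤ b i}) ∩ {b | ∑ i, b i ≤ 1} := by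
      ext; simp [simplexSet]
    rw [this]
    exact (isClosed_iInter fun i => isClosed_le (by fun_prop) (by fun_prop)).inter
      (isClosed_le (by fun_prop) (by fun_prop))
  exact this.measurableSet

lemma measurableSet_sAux (d : ℕ) : MeasurableSet (sAux d) := by
  have h1 : Measurable fun x : Fin (d + 1) → ℝ => x 0 := by fun_prop
  have h2 : Measurable fun x : Fin (d + 1) → ℝ => fun j : Fin d => x j.succ := by fun_prop
  exact (h1 measurableSet_Ico).inter (h2 (measurableSet_simplexSet d))

lemma injOn_qAux (d : ℕ) : InjOn (qAux d) (sAux d) := by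
  intro x hx y hy h
  have h0 : x 0 = y 0 := by
    have := sum_qAux d x
    rw [h, sum_qAux] at this
    linarith
  have hpos : 1 - y 0 ≠ 0 := by have := hy.1.2; linarith
  funext i
  induction i using Fin.cases with
  | zero => exact h0
  | succ i =>
    have := congrFun h i.succ
    simp only [qAux, qMap, Fin.cons_succ, h0] at this
    exact mul_left_cancel₀ hpos this

lemma image_qAux (d : ℕ) : qAux d '' sAux d = simplexSet (d + 1) \ {0} := by
  ext a
  constructor
  · rintro ⟨x, hx, rfl⟩
    obtain ⟨⟨h0, h1⟩, hb, hs⟩ := hx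
    refine ⟨⟨fun i => ?_, ?_⟩, fun h => ?_⟩
    · induction i using Fin.cases with
      | zero => exact mul_nonneg (by linarith) (by simpa using hs)
      | succ i => exact mul_nonneg (by linarith) (hb i)
    · rw [sum_qAux]; linarith
    · have h : qAux d x = 0 := h
      have := sum_qAux d x
      rw [h] at this
      simp at this
      linarith
  · rintro ⟨⟨hn, hs⟩, h0⟩
    have hA : 0 < ∑ i, a i := by
      refine lt_of_le_of_ne (Finset.sum_nonneg fun i _ => hn i) fun h => h0 ?_
      have := (Finset.sum_eq_zero_iff_of_nonneg fun i _ => hn i).1 h.symm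
      exact funext fun i => this i (Finset.mem_univ i)
    have hsum := Fin.sum_univ_succ a
    have hdiv : ∑ j : Fin d, a j.succ / (∑ i, a i) = (∑ j : Fin d, a j.succ) / ∑ i, a i :=
      (Finset.sum_div _ _ _).symm
    refine ⟨Fin.cons (1 - ∑ i, a i) fun j => a j.succ / ∑ i, a i, ⟨⟨?_, ?_⟩, ?_, ?_⟩, ?_⟩
    · simpa using hs
    · simpa using hA
    · intro i
      simpa using div_nonneg (hn i.succ) hA.le
    · simp only [Fin.cons_succ]
      rw [hdiv, div_le_one hA]
      linarith [hn 0]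
    · funext i
      induction i using Fin.cases with
      | zero =>
        simp only [qAux, qMap, Fin.cons_succ, Fin.cons_zero]
        rw [hdiv, sub_sub_cancel, mul_sub, mul_one, mul_div_cancel₀ _ hA.ne']
        linarith
      | succ i =>
        simp only [qAux, qMap, Fin.cons_succ, Fin.cons_zero]
        rw [sub_sub_cancel, mul_div_cancel₀ _ hA.ne']

/-- **Lemma 2.4.** A measurable function `g` on `ℝ^{d+1}` is Lebesgue-integrable on
`Δ_{d+1}` if and only if `(t,b) ↦ g(q(t,b))·(1-t)^d` (the pullback along `q` of the
top-degree form with density `g`, `(1-t)^d = |det Dq(t,b)|`) is Lebesgue-integrable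
on `[0,1] × Δ_d`. -/
theorem integrableOn_simplex_iff_qMap_pullback (d : ℕ) (g : (Fin (d + 1) → ℝ) → ℝ)
    (hg : Measurable g) :
    IntegrableOn g (simplexSet (d + 1)) ↔
    IntegrableOn (fun p : ℝ × (Fin d → ℝ) => g (qMap d p) * (1 - p.1) ^ d)
      (Set.Icc (0 : ℝ) 1 ×ˢ simplexSet d) := by
  have h1 : (simplexSet (d + 1) \ {0} : Set (Fin (d + 1) → ℝ)) =ᵐ[volume] simplexSet (d + 1) :=
    diff_null_ae_eq_self (by simp)
  have h2 : (Set.Ico (0 : ℝ) 1 ×ˢ simplexSet d : Set (ℝ × (Fin d → ℝ))) =ᵐ[volume]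
      (Set.Icc (0 : ℝ) 1 ×ˢ simplexSet d : Set (ℝ × (Fin d → ℝ))) :=
    Measure.set_prod_ae_eq Ico_ae_eq_Icc (ae_eq_refl _)
  rw [← integrableOn_congr_set_ae h1, ← integrableOn_congr_set_ae h2, ← image_qAux,
    integrableOn_image_iff_integrableOn_abs_det_fderiv_smul volume (measurableSet_sAux d)
      (fun x _ => (hasFDerivAt_qAux d x).hasFDerivWithinAt) (injOn_qAux d),
    ← (volume_preserving_piFinSuccAbove (fun _ : Fin (d + 1) => ℝ) 0).integrableOn_comp_preimage
      (MeasurableEquiv.measurableEmbedding _)]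
  refine integrableOn_congr_fun (fun x hx => ?_) (measurableSet_sAux d)
  have hx1 : x 0 < 1 := hx.1.2
  have hpos : 0 ≤ (1 - x 0) ^ d := pow_nonneg (by linarith) d
  show |(dAux d x).det| • g (qAux d x) = g (qAux d x) * (1 - x 0) ^ d
  rw [det_dAux, abs_neg, abs_of_nonneg hpos, smul_eq_mul, mul_comm]


end
end

section
/- Let V be a module over ℝ, d ≥ 1, and A an alternating d-linear form on V with values in ℝ. Then for all u, y_1, …, y_d ∈ V and all scalars c_1, …, c_d, e ∈ ℝ: A(c_1·u + e·y_1, …, c_d·u + e·y_d) = e^d·A(y_1,…,y_d) + e^{d−1}·Σ_{i=1}^d (−1)^{i−1} c_i·A(u, y_1, …, y_{i−1}, y_{i+1}, …, y_d), where in the i-th summand the argument y_i is omitted and u is inserted in the first slot. -/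
open MeasureTheory Set

noncomputable section

/-- Expansion over a finset of slots, by induction on the finset. -/
theorem alternating_expand_aux {V : Type*} [AddCommGroup V] [Module ℝ V]
    {n : ℕ} (A : V [⋀^Fin n]→ₗ[ℝ] ℝ) (u : V) (c : Fin n → ℝ) (s : Finset (Fin n)) :
    ∀ w : Fin n → V, A (fun i => if i ∈ s then c i • u + w i else w i) =
      A w + ∑ i ∈ s, c i * A (Function.update w i u) := by
  induction s using Finset.induction_on with
  | empty => intro w; simp
  | insert a s ha ih =>
    intro w
    have h1 : (fun i => if i ∈ insert a s then c i • u + w i else w i) =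
        Function.update (fun i => if i ∈ s then c i • u + w i else w i) a (c a • u + w a) := by
      funext i
      by_cases hi : i = a
      · subst hi; simp
      · simp [hi]
    have h2 : Function.update (fun i => if i ∈ s then c i • u + w i else w i) a (w a) =
        (fun i => if i ∈ s then c i • u + w i else w i) := by
      funext i
      by_cases hi : i = a
      · subst hi; simp [ha]
      · simp [hi]
    have h3 : Function.update (fun i => if i ∈ s then c i • u + w i else w i) a u =
        (fun i => if i ∈ s then c i • u + Function.update w a u i
          else Function.update w a u i) := by
      funext i
      by_cases hi : i = a
      · subst hi; simp [ha]
      · simp [hi]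
    have h4 : ∑ i ∈ s, c i * A (Function.update (Function.update w a u) i u) = 0 := by
      refine Finset.sum_eq_zero fun i hi => ?_
      have hia : a ≠ i := fun h => ha (h ▸ hi)
      rw [A.map_eq_zero_of_eq _ (i := a) (j := i) (by simp [hia]) hia, mul_zero]
    rw [h1, A.map_update_add, A.map_update_smul, h2, h3, ih, ih, h4, Finset.sum_insert ha,
      smul_eq_mul]
    ring

/-- The multilinear identity behind Lemma 3.3: for an alternating `(d+1)`-linear form `A`
on a real module `V` (arity `d + 1 ≥ 1`),
`A(c_1·u + e·y_1, …) = e^{d+1}·A(y) + e^d·∑_i (-1)^i c_i·A(u, y_0, …, ŷ_i, …, y_d)`. -/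
theorem alternatingMap_smul_add_expansion {V : Type*} [AddCommGroup V] [Module ℝ V]
    (d : ℕ) (A : V [⋀^Fin (d + 1)]→ₗ[ℝ] ℝ) (u : V) (y : Fin (d + 1) → V)
    (c : Fin (d + 1) → ℝ) (e : ℝ) :
    A (fun i => c i • u + e • y i) =
      e ^ (d + 1) * A y +
        e ^ d * ∑ i : Fin (d + 1), (-1 : ℝ) ^ (i : ℕ) * c i *
          A (Fin.cons u fun j : Fin d => y (i.succAbove j)) := by
  have key := alternating_expand_aux A u c Finset.univ (fun i => e • y i)
  simp only [Finset.mem_univ, if_true] at key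
  rw [key]
  have h0 : A (fun i => e • y i) = e ^ (d + 1) * A y := by
    have := A.map_smul_univ (fun _ => e) y
    simpa using this
  rw [h0, Finset.mul_sum]
  congr 1
  refine Finset.sum_congr rfl fun i _ => ?_
  have h1 : Function.update (fun i => e • y i) i u =
      i.insertNth u (fun j : Fin d => e • y (i.succAbove j)) := by
    funext k
    refine Fin.succAboveCases i ?_ (fun j => ?_) k <;> simp
  have h2 : A (Fin.cons u fun j : Fin d => e • y (i.succAbove j)) =
      e ^ d * A (Fin.cons u fun j : Fin d => y (i.succAbove j)) := by
    have h := A.map_smul_univ (Fin.cons 1 fun _ => e : Fin (d + 1) → ℝ)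
      (Fin.cons u fun j : Fin d => y (i.succAbove j))
    rw [Fin.prod_univ_succ] at h
    simp only [Fin.cons_zero, Fin.cons_succ, Finset.prod_const, Finset.card_univ,
      Fintype.card_fin, one_mul, smul_eq_mul] at h
    rw [← h]
    congr 1
    funext k
    refine Fin.cases ?_ (fun j => ?_) k <;> simp
  have h3 := A.map_insertNth i u (fun j : Fin d => e • y (i.succAbove j))
  rw [h1, h3]
  change c i * ((-1 : ℤ) ^ (i : ℕ) • A (Fin.cons u fun j : Fin d => e • y (i.succAbove j))) = _
  rw [h2, zsmul_eq_mul]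
  push_cast
  ring

end
end
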